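/- Let V be a Killing vector field on the Kähler base, i.e. L_V g = 0. Then its lift V^L to the Sasakian lift satisfies (L_{V^L} g^L)(X^L, Y^L) = 0 and (L_{V^L} g^L)(ξ, X^L) = 2Φ(V^L, X^L) for all vector fields X, Y on the base, where Φ is the fundamental 2-form of the lift. Moreover, if V is an infinitesimal automorphism of the Kähler form (L_V ω = 0), then L_{V^L} Φ = 0, and the 1-form L_{V^L} η is closed. -/

import Mathlib

/-!
Abstract framework for (local) differential geometry, following the standard
algebraic formulation: smooth functions form a commutative `ℝ`-algebra `F`,
vector fields form an `F`-module `V` equipped with a Lie bracket and a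
directional derivative (derivation) action on functions.  Metrics, connections,
curvature, Ricci tensors (via orthonormal frames), Lie derivatives, exterior
derivatives, almost contact metric / Sasakian structures, Kähler structures,
`D_{α,β}`-homotheties, twisted `η`-Ricci solitons, and the Sasakian lift of a
Kähler base are all expressed in this language.
-/

/-- The calculus of vector fields on a manifold: a Lie bracket and a
directional-derivative action of vector fields on functions, with the usual
rules. -/
structure VectorCalculus (F : Type*) (V : Type*) [CommRing F] [Algebra ℝ F]
    [AddCommGroup V] [Module F V] where
  bracket : V → V → V
  deriv : V → F → F
  bracket_antisymm : ∀ X Y, bracket X Y = - bracket Y X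
  bracket_add_left : ∀ X Y Z, bracket (X + Y) Z = bracket X Z + bracket Y Z
  bracket_smul_left : ∀ (f : F) (X Y : V),
      bracket (f • X) Y = f • bracket X Y - deriv Y f • X
  jacobi : ∀ X Y Z,
      bracket X (bracket Y Z) + bracket Y (bracket Z X) + bracket Z (bracket X Y) = 0
  deriv_add : ∀ (X : V) (f g : F), deriv X (f + g) = deriv X f + deriv X g
  deriv_mul : ∀ (X : V) (f g : F), deriv X (f * g) = deriv X f * g + f * deriv X g
  deriv_add_left : ∀ (X Y : V) (f : F), deriv (X + Y) f = deriv X f + deriv Y f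
  deriv_smul_left : ∀ (f : F) (X : V) (h : F), deriv (f • X) h = f * deriv X h
  deriv_const : ∀ (X : V) (r : ℝ), deriv X (algebraMap ℝ F r) = 0
  deriv_bracket : ∀ (X Y : V) (f : F),
      deriv (bracket X Y) f = deriv X (deriv Y f) - deriv Y (deriv X f)

section Defs

variable {F : Type*} {V : Type*} [CommRing F] [Algebra ℝ F]
  [AddCommGroup V] [Module F V]

/-- A (pseudo-)Riemannian metric: a symmetric `F`-bilinear form on vector fields. -/
structure IsMetric (g : V → V → F) : Prop where
  symm : ∀ X Y, g X Y = g Y X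
  add_left : ∀ X Y Z, g (X + Y) Z = g X Z + g Y Z
  smul_left : ∀ (f : F) (X Y : V), g (f • X) Y = f * g X Y

/-- `nabla` is the Levi-Civita connection of the metric `g`: an affine,
torsion-free, metric-compatible connection. -/
structure IsLeviCivita (C : VectorCalculus F V) (g : V → V → F)
    (nabla : V → V → V) : Prop where
  add_left : ∀ X Y Z, nabla (X + Y) Z = nabla X Z + nabla Y Z
  smul_left : ∀ (f : F) (X Y : V), nabla (f • X) Y = f • nabla X Y
  add_right : ∀ X Y Z, nabla X (Y + Z) = nabla X Y + nabla X Z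
  leibniz : ∀ (X : V) (f : F) (Y : V),
      nabla X (f • Y) = C.deriv X f • Y + f • nabla X Y
  torsion_free : ∀ X Y, nabla X Y - nabla Y X = C.bracket X Y
  compat : ∀ X Y Z, C.deriv X (g Y Z) = g (nabla X Y) Z + g Y (nabla X Z)

/-- Riemann curvature operator `R_{X Y} Z = ∇_X ∇_Y Z - ∇_Y ∇_X Z - ∇_{[X,Y]} Z`. -/
def curv (C : VectorCalculus F V) (nabla : V → V → V) (X Y Z : V) : V :=
  nabla X (nabla Y Z) - nabla Y (nabla X Z) - nabla (C.bracket X Y) Z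

/-- An orthonormal spanning frame for the metric `g`. -/
def IsOrthFrame (g : V → V → F) {m : ℕ} (E : Fin m → V) : Prop :=
  (∀ i j, g (E i) (E j) = if i = j then (1 : F) else 0) ∧
  (∀ X : V, X = ∑ i, g X (E i) • E i)

/-- Ricci tensor, computed as the trace of the curvature in the orthonormal
frame `E`:  `Ric(Y,Z) = ∑ᵢ g(R_{Eᵢ Y} Z, Eᵢ)`. -/
def ricci (C : VectorCalculus F V) (nabla : V → V → V) {m : ℕ} (E : Fin m → V)
    (g : V → V → F) (Y Z : V) : F :=
  ∑ i, g (curv C nabla (E i) Y Z) (E i)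

/-- Scalar curvature: trace of the Ricci tensor in the frame `E`. -/
def scalarCurv (C : VectorCalculus F V) (nabla : V → V → V) {m : ℕ}
    (E : Fin m → V) (g : V → V → F) : F :=
  ∑ i, ricci C nabla E g (E i) (E i)

/-- Lie derivative of a metric (symmetric 2-tensor):
`(L_X g)(Y,Z) = X g(Y,Z) - g([X,Y],Z) - g(Y,[X,Z])`. -/
def lieDerivMetric (C : VectorCalculus F V) (X : V) (g : V → V → F) (Y Z : V) : F :=
  C.deriv X (g Y Z) - g (C.bracket X Y) Z - g Y (C.bracket X Z)

/-- Lie derivative of a 1-form: `(L_X η)(Y) = X η(Y) - η([X,Y])`. -/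
def lieDerivOneForm (C : VectorCalculus F V) (X : V) (eta : V → F) (Y : V) : F :=
  C.deriv X (eta Y) - eta (C.bracket X Y)

/-- Lie derivative of a (1,1)-tensor field: `(L_X φ)(Y) = [X, φY] - φ[X,Y]`. -/
def lieDerivEndo (C : VectorCalculus F V) (X : V) (phi : V → V) (Y : V) : V :=
  C.bracket X (phi Y) - phi (C.bracket X Y)

/-- Lie derivative of a 2-form. -/
def lieDerivTwoForm (C : VectorCalculus F V) (X : V) (Th : V → V → F) (Y Z : V) : F :=
  C.deriv X (Th Y Z) - Th (C.bracket X Y) Z - Th Y (C.bracket X Z)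

/-- Exterior derivative of a 1-form (Blair's convention, with the factor `1/2`):
`dη(X,Y) = (1/2)(X η(Y) - Y η(X) - η([X,Y]))`. -/
noncomputable def extDerivOneForm (C : VectorCalculus F V) (eta : V → F) (X Y : V) : F :=
  (1/2 : ℝ) • (C.deriv X (eta Y) - C.deriv Y (eta X) - eta (C.bracket X Y))

/-- A 1-form is closed iff `X a(Y) - Y a(X) - a([X,Y]) = 0` for all `X, Y`. -/
def IsClosedOneForm (C : VectorCalculus F V) (a : V → F) : Prop :=
  ∀ X Y, C.deriv X (a Y) - C.deriv Y (a X) - a (C.bracket X Y) = 0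

/-- A 2-form is closed iff its exterior derivative vanishes. -/
def IsClosedTwoForm (C : VectorCalculus F V) (Th : V → V → F) : Prop :=
  ∀ X Y Z,
    C.deriv X (Th Y Z) - C.deriv Y (Th X Z) + C.deriv Z (Th X Y)
      - Th (C.bracket X Y) Z + Th (C.bracket X Z) Y - Th (C.bracket Y Z) X = 0

/-- Nijenhuis torsion of a (1,1)-tensor field `S`:
`N_S(X,Y) = S²[X,Y] + [SX,SY] - S([SX,Y]) - S([X,SY])`. -/
def nijenhuis (C : VectorCalculus F V) (S : V → V) (X Y : V) : V :=
  S (S (C.bracket X Y)) + C.bracket (S X) (S Y)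
    - S (C.bracket (S X) Y) - S (C.bracket X (S Y))

/-- An almost contact metric structure `(φ, ξ, η, g)`. -/
structure IsAlmostContactMetric (phi : V → V) (xi : V) (eta : V → F)
    (g : V → V → F) : Prop where
  metric : IsMetric g
  phi_add : ∀ X Y, phi (X + Y) = phi X + phi Y
  phi_smul : ∀ (f : F) (X : V), phi (f • X) = f • phi X
  eta_add : ∀ X Y, eta (X + Y) = eta X + eta Y
  eta_smul : ∀ (f : F) (X : V), eta (f • X) = f * eta X
  phi_sq : ∀ X, phi (phi X) = -X + eta X • xi
  eta_xi : eta xi = 1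
  compat : ∀ X Y, g (phi X) (phi Y) = g X Y - eta X * eta Y

/-- A Sasakian structure: an almost contact metric structure whose Levi-Civita
connection `nabla` satisfies `(∇_X φ)Y = g(X,Y) ξ - η(Y) X`. -/
def IsSasakianWith (C : VectorCalculus F V) (phi : V → V) (xi : V) (eta : V → F)
    (g : V → V → F) (nabla : V → V → V) : Prop :=
  IsAlmostContactMetric phi xi eta g ∧ IsLeviCivita C g nabla ∧
    ∀ X Y, nabla X (phi Y) - phi (nabla X Y) = g X Y • xi - eta Y • X

/-- Symmetric tensor product of two 1-forms:
`(a ⊙ b)(Y,Z) = (1/2)(a(Y) b(Z) + a(Z) b(Y))`. -/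
noncomputable def symProd (a b : V → F) (Y Z : V) : F := (1/2 : ℝ) • (a Y * b Z + a Z * b Y)

/-- Twisted `η`-Ricci soliton with data `(X, λ, C₁, C₂)`:
`η(X) = 0` and `Ric + (1/2) L_X g = λ g + 2 C₁ (L_X η) ⊙ η + C₂ η ⊗ η`. -/
def IsTwistedEtaRicciSoliton (C : VectorCalculus F V) (g : V → V → F)
    (eta : V → F) (Ric : V → V → F) (X : V) (lam C1 C2 : ℝ) : Prop :=
  eta X = 0 ∧
  ∀ Y Z, Ric Y Z + (1/2 : ℝ) • lieDerivMetric C X g Y Z =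
    lam • g Y Z + (2 * C1) • symProd (lieDerivOneForm C X eta) eta Y Z
      + C2 • (eta Y * eta Z)

/-- A Kähler structure `(J, g)` with Levi-Civita connection `nabla`. -/
structure IsKaehler (C : VectorCalculus F V) (J : V → V) (g : V → V → F)
    (nabla : V → V → V) : Prop where
  metric : IsMetric g
  lc : IsLeviCivita C g nabla
  J_add : ∀ X Y, J (X + Y) = J X + J Y
  J_smul : ∀ (f : F) (X : V), J (f • X) = f • J X
  J_sq : ∀ X, J (J X) = -X
  hermitian : ∀ X Y, g (J X) (J Y) = g X Y
  parallel : ∀ X Y, nabla X (J Y) = J (nabla X Y)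

/-- The metric of the `D_{α,β}`-homothety: `g' = α g + (β² - α) η ⊗ η`. -/
def dHomMetric (g : V → V → F) (eta : V → F) (α β : ℝ) (X Y : V) : F :=
  α • g X Y + (β ^ 2 - α) • (eta X * eta Y)

/-- The 1-form of the `D_{α,β}`-homothety: `η' = β η`. -/
def dHomEta (eta : V → F) (β : ℝ) (X : V) : F := β • eta X

end Defs

section DefsR

variable {F : Type*} {V : Type*} [CommRing F] [Algebra ℝ F]
  [AddCommGroup V] [Module F V] [Module ℝ V] [IsScalarTower ℝ F V]

/-- The Reeb field of the `D_{α,β}`-homothety: `ξ' = (1/β) ξ`. -/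
noncomputable def dHomXi (xi : V) (β : ℝ) : V := β⁻¹ • xi

/-- A `c`-Sasakian structure (`c` a real constant): an almost contact metric
structure whose Levi-Civita connection satisfies
`(∇_X φ)Y = c (g(X,Y) ξ - η(Y) X)`. -/
def IsCSasakianWith (C : VectorCalculus F V) (phi : V → V) (xi : V)
    (eta : V → F) (g : V → V → F) (nabla : V → V → V) (c : ℝ) : Prop :=
  IsAlmostContactMetric phi xi eta g ∧ IsLeviCivita C g nabla ∧
    ∀ X Y, nabla X (phi Y) - phi (nabla X Y) = c • (g X Y • xi - eta Y • X)

end DefsR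

/-- The Sasakian lift of a Kähler base `(N, J, g)` to `M = ℝ × N`, presented
axiomatically:  `liftF` is the pullback of functions along `π₂`, `liftV` is the
lift of vector fields `X ↦ X^L = X - (τ(X)∘π₂) ξ`, `ξ = ∂_t`, `η = dt + π₂*τ`,
`φ X^L = (JX)^L`, `φ ξ = 0`, `g^L = η ⊗ η + π₂* g`.  The structure fields
record exactly the identities satisfied by this construction. -/
structure SasakianLiftData
    {Fb : Type*} {Vb : Type*} [CommRing Fb] [Algebra ℝ Fb]
    [AddCommGroup Vb] [Module Fb Vb]
    {Fm : Type*} {Vm : Type*} [CommRing Fm] [Algebra ℝ Fm]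
    [AddCommGroup Vm] [Module Fm Vm]
    (Cb : VectorCalculus Fb Vb) (Cm : VectorCalculus Fm Vm)
    (J : Vb → Vb) (gb : Vb → Vb → Fb) where
  liftF : Fb →ₐ[ℝ] Fm
  liftV : Vb → Vm
  xi : Vm
  eta : Vm → Fm
  phi : Vm → Vm
  gL : Vm → Vm → Fm
  liftV_add : ∀ X Y, liftV (X + Y) = liftV X + liftV Y
  liftV_smul : ∀ (f : Fb) (X : Vb), liftV (f • X) = liftF f • liftV X
  eta_add : ∀ W W', eta (W + W') = eta W + eta W'
  eta_smul : ∀ (f : Fm) (W : Vm), eta (f • W) = f * eta W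
  phi_add : ∀ W W', phi (W + W') = phi W + phi W'
  phi_smul : ∀ (f : Fm) (W : Vm), phi (f • W) = f • phi W
  gL_metric : IsMetric gL
  eta_xi : eta xi = 1
  eta_lift : ∀ X, eta (liftV X) = 0
  phi_lift : ∀ X, phi (liftV X) = liftV (J X)
  phi_xi : phi xi = 0
  gL_lift : ∀ X Y, gL (liftV X) (liftV Y) = liftF (gb X Y)
  gL_xi : ∀ W, gL xi W = eta W
  bracket_lift : ∀ X Y, Cm.bracket (liftV X) (liftV Y)
      = liftV (Cb.bracket X Y) - ((2 : Fm) * liftF (gb X (J Y))) • xi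
  bracket_xi_lift : ∀ X, Cm.bracket xi (liftV X) = 0
  deriv_lift : ∀ (X : Vb) (f : Fb),
      Cm.deriv (liftV X) (liftF f) = liftF (Cb.deriv X f)
  deriv_xi : ∀ f : Fb, Cm.deriv xi (liftF f) = 0
  spanning : ∀ W : Vm, ∃ (k : ℕ) (a : Fin k → Fm) (X : Fin k → Vb),
      W = eta W • xi + ∑ i, a i • liftV (X i)

/-!
The bracket of two lifts is `[X^L, Y^L] = [X, Y]^L - 2 ω(X, Y) ξ`.  Neither `g^L(·, Z^L)` nor `φ`
sees the vertical part, so on lifts `L_{V^L} g^L` and `L_{V^L} Φ` are the pullbacks of `L_V g` and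
`L_V ω`, whereas `g^L(ξ, ·) = η` sees only the vertical part, which produces the mixed term
`2 Φ(V^L, X^L)`.  As `L_{V^L} Φ` is tensorial and vanishes when one argument is `ξ`, it vanishes
together with `L_V ω`.  The same bracket formula says that `dη = 2 Φ` (for `d` without Blair's
factor `1/2`), and Lie derivatives commute with `d`, so `d(L_{V^L} η) = 2 L_{V^L} Φ`.
-/

namespace VectorCalculus

variable {F V : Type*} [CommRing F] [Algebra ℝ F] [AddCommGroup V] [Module F V]
  (C : VectorCalculus F V)

theorem deriv_zero (X : V) : C.deriv X 0 = 0 :=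
  map_zero (AddMonoidHom.mk' (C.deriv X) (C.deriv_add X))

theorem deriv_one (X : V) : C.deriv X 1 = 0 := by
  simpa using C.deriv_const X 1

theorem deriv_sub (X : V) (f g : F) : C.deriv X (f - g) = C.deriv X f - C.deriv X g :=
  map_sub (AddMonoidHom.mk' (C.deriv X) (C.deriv_add X)) f g

theorem bracket_add_right (X Y Z : V) :
    C.bracket X (Y + Z) = C.bracket X Y + C.bracket X Z := by
  rw [C.bracket_antisymm, C.bracket_add_left, neg_add, ← C.bracket_antisymm,
    ← C.bracket_antisymm]

theorem bracket_neg_right (X Y : V) : C.bracket X (-Y) = -C.bracket X Y :=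
  map_neg (AddMonoidHom.mk' (C.bracket X) (C.bracket_add_right X)) Y

theorem bracket_smul_right (f : F) (X Y : V) :
    C.bracket X (f • Y) = f • C.bracket X Y + C.deriv X f • Y := by
  rw [C.bracket_antisymm, C.bracket_smul_left, C.bracket_antisymm Y, smul_neg]
  abel

theorem bracket_self (X : V) : C.bracket X X = 0 := by
  let : Module ℝ V := Module.compHom V (algebraMap ℝ F)
  have : IsAddTorsionFree V := .of_isTorsionFree ℝ V
  exact self_eq_neg.mp (C.bracket_antisymm X X)

theorem bracket_bracket (X Y Z : V) :
    C.bracket X (C.bracket Y Z) =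
      C.bracket (C.bracket X Y) Z + C.bracket Y (C.bracket X Z) := by
  have h := C.jacobi X Y Z
  rw [C.bracket_antisymm Z X, C.bracket_neg_right, C.bracket_antisymm Z] at h
  rw [← sub_eq_zero, ← h]
  abel

/-- The Lie derivative `L_U α` of a 1-form, bundled as a 1-form. -/
def lieDerivLinear (U : V) (α : V →ₗ[F] F) : V →ₗ[F] F where
  toFun := lieDerivOneForm C U α
  map_add' X Y := by
    simp only [lieDerivOneForm, C.bracket_add_right, C.deriv_add, map_add]
    ring
  map_smul' f X := by
    simp only [lieDerivOneForm, C.bracket_smul_right, C.deriv_mul, map_add, map_smul, smul_eq_mul,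
      RingHom.id_apply]
    ring

theorem lieDerivLinear_apply (U : V) (α : V →ₗ[F] F) (X : V) :
    C.lieDerivLinear U α X = C.deriv U (α X) - α (C.bracket U X) :=
  rfl

/-- The Lie derivative `L_U B` of a bilinear form, bundled as a bilinear form. -/
def lieDerivBilin (U : V) (B : V →ₗ[F] V →ₗ[F] F) : V →ₗ[F] V →ₗ[F] F :=
  LinearMap.mk₂ F (lieDerivTwoForm C U fun X Y => B X Y)
    (fun X X' Y => by
      simp only [lieDerivTwoForm, C.bracket_add_right, C.deriv_add, map_add, LinearMap.add_apply]
      ring)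
    (fun f X Y => by
      simp only [lieDerivTwoForm, C.bracket_smul_right, C.deriv_mul, map_add, map_smul,
        LinearMap.add_apply, LinearMap.smul_apply, smul_eq_mul]
      ring)
    (fun X Y Y' => by
      simp only [lieDerivTwoForm, C.bracket_add_right, C.deriv_add, map_add]
      ring)
    (fun f X Y => by
      simp only [lieDerivTwoForm, C.bracket_smul_right, C.deriv_mul, map_add, map_smul, smul_eq_mul]
      ring)

theorem lieDerivBilin_apply (U : V) (B : V →ₗ[F] V →ₗ[F] F) (X Y : V) :
    C.lieDerivBilin U B X Y =
      C.deriv U (B X Y) - B (C.bracket U X) Y - B X (C.bracket U Y) :=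
  rfl

theorem lieDerivBilin_add (U : V) (B B' : V →ₗ[F] V →ₗ[F] F) :
    C.lieDerivBilin U (B + B') = C.lieDerivBilin U B + C.lieDerivBilin U B' := by
  ext X Y
  simp only [lieDerivBilin_apply, LinearMap.add_apply, C.deriv_add]
  ring

/-- The exterior derivative `dα` of a 1-form, bundled as a bilinear form. It is normalized as in
`IsClosedOneForm`, so it is twice `extDerivOneForm`. -/
def extDeriv (α : V →ₗ[F] F) : V →ₗ[F] V →ₗ[F] F :=
  LinearMap.mk₂ F (fun X Y => C.deriv X (α Y) - C.deriv Y (α X) - α (C.bracket X Y))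
    (fun X X' Y => by
      simp only [C.bracket_add_left, C.deriv_add, C.deriv_add_left, map_add]
      ring)
    (fun f X Y => by
      simp only [C.bracket_smul_left, C.deriv_mul, C.deriv_smul_left, map_sub, map_smul,
        smul_eq_mul]
      ring)
    (fun X Y Y' => by
      simp only [C.bracket_add_right, C.deriv_add, C.deriv_add_left, map_add]
      ring)
    (fun f X Y => by
      simp only [C.bracket_smul_right, C.deriv_mul, C.deriv_smul_left, map_add, map_smul,
        smul_eq_mul]
      ring)

theorem extDeriv_apply (α : V →ₗ[F] F) (X Y : V) :
    C.extDeriv α X Y = C.deriv X (α Y) - C.deriv Y (α X) - α (C.bracket X Y) :=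
  rfl

theorem isClosedOneForm_iff_extDeriv_eq_zero (α : V →ₗ[F] F) :
    IsClosedOneForm C α ↔ C.extDeriv α = 0 :=
  (LinearMap.ext_iff₂ (f := C.extDeriv α) (g := 0)).symm

theorem extDeriv_lieDerivLinear (U : V) (α : V →ₗ[F] F) :
    C.extDeriv (C.lieDerivLinear U α) = C.lieDerivBilin U (C.extDeriv α) := by
  ext X Y
  simp only [extDeriv_apply, lieDerivLinear_apply, lieDerivBilin_apply, C.deriv_sub,
    C.deriv_bracket, C.bracket_bracket U X Y, map_add]
  ring

end VectorCalculus

namespace IsMetric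

variable {F V : Type*} [CommRing F] [AddCommGroup V] [Module F V] {g : V → V → F}

/-- A metric as a bundled bilinear form. -/
def toBilin (hg : IsMetric g) : V →ₗ[F] V →ₗ[F] F :=
  LinearMap.mk₂ F g hg.add_left hg.smul_left
    (fun X Y Z => by rw [hg.symm, hg.add_left, hg.symm Y, hg.symm Z])
    (fun f X Y => by rw [hg.symm, hg.smul_left, hg.symm Y, smul_eq_mul])

theorem zero_left (hg : IsMetric g) (X : V) : g 0 X = 0 :=
  hg.toBilin.map_zero₂ X

theorem zero_right (hg : IsMetric g) (X : V) : g X 0 = 0 :=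
  map_zero (hg.toBilin X)

theorem sub_left (hg : IsMetric g) (X Y Z : V) : g (X - Y) Z = g X Z - g Y Z :=
  hg.toBilin.map_sub₂ X Y Z

end IsMetric

namespace SasakianLiftData

variable {Fb Vb Fm Vm : Type*} [CommRing Fb] [Algebra ℝ Fb] [AddCommGroup Vb] [Module Fb Vb]
  [CommRing Fm] [Algebra ℝ Fm] [AddCommGroup Vm] [Module Fm Vm]
  {Cb : VectorCalculus Fb Vb} {Cm : VectorCalculus Fm Vm} {J : Vb → Vb} {gb : Vb → Vb → Fb}
  (L : SasakianLiftData Cb Cm J gb)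

/-- The contact form `η` as a bundled 1-form. -/
def etaLinear : Vm →ₗ[Fm] Fm where
  toFun := L.eta
  map_add' := L.eta_add
  map_smul' := L.eta_smul

/-- The structure tensor `φ` as a bundled endomorphism of the vector fields. -/
def phiLinear : Vm →ₗ[Fm] Vm where
  toFun := L.phi
  map_add' := L.phi_add
  map_smul' := L.phi_smul

/-- The fundamental 2-form `Φ(W, W') = g^L(W, φ W')` of the lift, as a bilinear form. -/
def fundamentalForm : Vm →ₗ[Fm] Vm →ₗ[Fm] Fm :=
  L.gL_metric.toBilin.compl₂ L.phiLinear

theorem etaLinear_apply (W : Vm) : L.etaLinear W = L.eta W :=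
  rfl

theorem fundamentalForm_apply (W W' : Vm) : L.fundamentalForm W W' = L.gL W (L.phi W') :=
  rfl

theorem eta_zero : L.eta 0 = 0 :=
  map_zero L.etaLinear

theorem eta_sub (W W' : Vm) : L.eta (W - W') = L.eta W - L.eta W' :=
  map_sub L.etaLinear W W'

theorem phi_sub (W W' : Vm) : L.phi (W - W') = L.phi W - L.phi W' :=
  map_sub L.phiLinear W W'

theorem span_insert_xi_range_liftV :
    Submodule.span Fm (insert L.xi (Set.range L.liftV)) = ⊤ := by
  refine Submodule.eq_top_iff'.mpr fun W => ?_
  obtain ⟨k, a, X, hW⟩ := L.spanning W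
  rw [hW]
  exact add_mem (Submodule.smul_mem _ _ (Submodule.subset_span (.inl rfl)))
    (sum_mem fun i _ => Submodule.smul_mem _ _ (Submodule.subset_span (.inr ⟨X i, rfl⟩)))

theorem linearMap_ext {E : Type*} [AddCommGroup E] [Module Fm E] {f f' : Vm →ₗ[Fm] E}
    (h_xi : f L.xi = f' L.xi) (h_lift : ∀ X, f (L.liftV X) = f' (L.liftV X)) : f = f' :=
  LinearMap.ext_on L.span_insert_xi_range_liftV <| by
    rintro _ (rfl | ⟨X, rfl⟩)
    exacts [h_xi, h_lift X]

theorem bilin_ext {E : Type*} [AddCommGroup E] [Module Fm E] {B B' : Vm →ₗ[Fm] Vm →ₗ[Fm] E}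
    (h_xi_xi : B L.xi L.xi = B' L.xi L.xi)
    (h_xi_lift : ∀ X, B L.xi (L.liftV X) = B' L.xi (L.liftV X))
    (h_lift_xi : ∀ X, B (L.liftV X) L.xi = B' (L.liftV X) L.xi)
    (h_lift_lift : ∀ X Y, B (L.liftV X) (L.liftV Y) = B' (L.liftV X) (L.liftV Y)) : B = B' :=
  L.linearMap_ext (L.linearMap_ext h_xi_xi h_xi_lift)
    fun X => L.linearMap_ext (h_lift_xi X) (h_lift_lift X)

theorem eta_phi (W : Vm) : L.eta (L.phi W) = 0 := by
  have h : L.etaLinear ∘ₗ L.phiLinear = 0 := L.linearMap_ext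
    (show L.eta (L.phi L.xi) = 0 by rw [L.phi_xi, L.eta_zero])
    fun X => show L.eta (L.phi (L.liftV X)) = 0 by rw [L.phi_lift, L.eta_lift]
  exact LinearMap.congr_fun h W

theorem fundamentalForm_xi_left (W : Vm) : L.fundamentalForm L.xi W = 0 := by
  rw [fundamentalForm_apply, L.gL_xi, L.eta_phi]

theorem fundamentalForm_xi_right (W : Vm) : L.fundamentalForm W L.xi = 0 := by
  rw [fundamentalForm_apply, L.phi_xi, L.gL_metric.zero_right]

theorem fundamentalForm_lift (X Y : Vb) :
    L.fundamentalForm (L.liftV X) (L.liftV Y) = L.liftF (gb X (J Y)) := by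
  rw [fundamentalForm_apply, L.phi_lift, L.gL_lift]

theorem bracket_lift_xi (X : Vb) : Cm.bracket (L.liftV X) L.xi = 0 := by
  rw [Cm.bracket_antisymm, L.bracket_xi_lift, neg_zero]

theorem eta_bracket_lift (X Y : Vb) :
    L.eta (Cm.bracket (L.liftV X) (L.liftV Y)) = -(2 * L.liftF (gb X (J Y))) := by
  rw [L.bracket_lift, L.eta_sub, L.eta_smul, L.eta_lift, L.eta_xi, mul_one, zero_sub]

theorem phi_bracket_lift (X Y : Vb) :
    L.phi (Cm.bracket (L.liftV X) (L.liftV Y)) = L.liftV (J (Cb.bracket X Y)) := by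
  rw [L.bracket_lift, L.phi_sub, L.phi_smul, L.phi_xi, L.phi_lift, smul_zero, sub_zero]

theorem gL_bracket_lift_left (X Y Z : Vb) :
    L.gL (Cm.bracket (L.liftV X) (L.liftV Y)) (L.liftV Z) = L.liftF (gb (Cb.bracket X Y) Z) := by
  rw [L.bracket_lift, L.gL_metric.sub_left, L.gL_metric.smul_left, L.gL_xi, L.eta_lift,
    L.gL_lift, mul_zero, sub_zero]

theorem gL_bracket_lift_right (X Y Z : Vb) :
    L.gL (L.liftV Z) (Cm.bracket (L.liftV X) (L.liftV Y)) = L.liftF (gb Z (Cb.bracket X Y)) := by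
  rw [L.gL_metric.symm, L.gL_bracket_lift_left, ← L.gL_lift, L.gL_metric.symm, L.gL_lift]

theorem lieDerivMetric_lift (U X Y : Vb) :
    lieDerivMetric Cm (L.liftV U) L.gL (L.liftV X) (L.liftV Y) =
      L.liftF (lieDerivMetric Cb U gb X Y) := by
  simp only [lieDerivMetric, L.gL_lift, L.deriv_lift, gL_bracket_lift_left,
    gL_bracket_lift_right, map_sub]

theorem lieDerivMetric_xi_lift (U X : Vb) :
    lieDerivMetric Cm (L.liftV U) L.gL L.xi (L.liftV X) =
      2 * L.gL (L.liftV U) (L.phi (L.liftV X)) := by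
  rw [lieDerivMetric, L.bracket_lift_xi, L.gL_metric.zero_left, L.gL_xi, L.gL_xi, L.eta_lift,
    Cm.deriv_zero, L.eta_bracket_lift, L.phi_lift, L.gL_lift]
  ring

theorem lieDerivBilin_fundamentalForm_lift (U X Y : Vb) :
    Cm.lieDerivBilin (L.liftV U) L.fundamentalForm (L.liftV X) (L.liftV Y) =
      L.liftF (lieDerivTwoForm Cb U (fun A B => gb A (J B)) X Y) := by
  simp only [VectorCalculus.lieDerivBilin_apply, fundamentalForm_apply, L.phi_lift, L.gL_lift,
    L.deriv_lift, gL_bracket_lift_left, phi_bracket_lift, lieDerivTwoForm, map_sub]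

theorem lieDerivBilin_fundamentalForm_eq_zero {U : Vb}
    (hU : ∀ X Y : Vb, lieDerivTwoForm Cb U (fun A B => gb A (J B)) X Y = 0) :
    Cm.lieDerivBilin (L.liftV U) L.fundamentalForm = 0 := by
  have h_xi_left (W : Vm) : Cm.lieDerivBilin (L.liftV U) L.fundamentalForm L.xi W = 0 := by
    simp only [VectorCalculus.lieDerivBilin_apply, fundamentalForm_xi_left, bracket_lift_xi,
      Cm.deriv_zero, map_zero, LinearMap.zero_apply, sub_zero]
  have h_xi_right (W : Vm) : Cm.lieDerivBilin (L.liftV U) L.fundamentalForm W L.xi = 0 := by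
    simp only [VectorCalculus.lieDerivBilin_apply, fundamentalForm_xi_right, bracket_lift_xi,
      Cm.deriv_zero, map_zero, sub_zero]
  refine L.bilin_ext (h_xi_left _) (fun _ => h_xi_left _) (fun _ => h_xi_right _) fun X Y => ?_
  rw [lieDerivBilin_fundamentalForm_lift, hU, map_zero, LinearMap.zero_apply, LinearMap.zero_apply]

theorem extDeriv_etaLinear : Cm.extDeriv L.etaLinear = 2 • L.fundamentalForm := by
  refine L.bilin_ext ?_ (fun X => ?_) (fun X => ?_) fun X Y => ?_ <;>
    simp [VectorCalculus.extDeriv_apply, etaLinear_apply, fundamentalForm_xi_left,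
      fundamentalForm_xi_right, fundamentalForm_lift, Cm.bracket_self, L.bracket_xi_lift,
      bracket_lift_xi, L.eta_xi, L.eta_lift, eta_zero, eta_bracket_lift, Cm.deriv_zero,
      Cm.deriv_one]

theorem extDeriv_lieDerivLinear_etaLinear (W : Vm) :
    Cm.extDeriv (Cm.lieDerivLinear W L.etaLinear) = 2 • Cm.lieDerivBilin W L.fundamentalForm := by
  rw [Cm.extDeriv_lieDerivLinear, extDeriv_etaLinear, two_nsmul, Cm.lieDerivBilin_add, two_nsmul]

end SasakianLiftData

theorem lift_of_killing_field_general
    {Fb Vb Fm Vm : Type*} [CommRing Fb] [Algebra ℝ Fb] [AddCommGroup Vb] [Module Fb Vb]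
    [CommRing Fm] [Algebra ℝ Fm] [AddCommGroup Vm] [Module Fm Vm]
    {Cb : VectorCalculus Fb Vb} {Cm : VectorCalculus Fm Vm} {J : Vb → Vb} {gb : Vb → Vb → Fb}
    (L : SasakianLiftData Cb Cm J gb) (Vf : Vb) :
    (∀ X Y : Vb, lieDerivMetric Cm (L.liftV Vf) L.gL (L.liftV X) (L.liftV Y)
        = L.liftF (lieDerivMetric Cb Vf gb X Y)) ∧
    (∀ X : Vb, lieDerivMetric Cm (L.liftV Vf) L.gL L.xi (L.liftV X)
        = 2 * L.gL (L.liftV Vf) (L.phi (L.liftV X))) ∧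
    ((∀ X Y : Vb, lieDerivTwoForm Cb Vf (fun A B => gb A (J B)) X Y = 0) →
      (∀ W W' : Vm,
        lieDerivTwoForm Cm (L.liftV Vf) (fun A B => L.gL A (L.phi B)) W W' = 0) ∧
      IsClosedOneForm Cm (fun W => lieDerivOneForm Cm (L.liftV Vf) L.eta W)) := by
  refine ⟨L.lieDerivMetric_lift Vf, L.lieDerivMetric_xi_lift Vf, fun hω => ?_⟩
  have hΦ := L.lieDerivBilin_fundamentalForm_eq_zero hω
  have hη : Cm.extDeriv (Cm.lieDerivLinear (L.liftV Vf) L.etaLinear) = 0 := by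
    rw [L.extDeriv_lieDerivLinear_etaLinear, hΦ, smul_zero]
  exact ⟨LinearMap.congr_fun₂ hΦ, (Cm.isClosedOneForm_iff_extDeriv_eq_zero _).mpr hη⟩

/-- If `V` is Killing on the Kähler base, its lift satisfies
`(L_{V^L} g^L)(X^L,Y^L) = 0` and `(L_{V^L} g^L)(ξ, X^L) = 2 Φ(V^L, X^L)`.
Moreover, if `L_V ω = 0`, then `L_{V^L} Φ = 0` and `L_{V^L} η` is closed. -/
theorem lift_of_killing_field
    {Fb Vb Fm Vm : Type*} [CommRing Fb] [Algebra ℝ Fb]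
    [AddCommGroup Vb] [Module Fb Vb]
    [CommRing Fm] [Algebra ℝ Fm] [AddCommGroup Vm] [Module Fm Vm]
    (Cb : VectorCalculus Fb Vb) (Cm : VectorCalculus Fm Vm)
    (J : Vb → Vb) (gb : Vb → Vb → Fb) (nablab : Vb → Vb → Vb)
    (hK : IsKaehler Cb J gb nablab)
    (L : SasakianLiftData Cb Cm J gb)
    (Vf : Vb)
    (hKill : ∀ X Y : Vb, lieDerivMetric Cb Vf gb X Y = 0) :
    (∀ X Y : Vb, lieDerivMetric Cm (L.liftV Vf) L.gL (L.liftV X) (L.liftV Y) = 0) ∧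
    (∀ X : Vb, lieDerivMetric Cm (L.liftV Vf) L.gL L.xi (L.liftV X)
        = (2 : Fm) * L.gL (L.liftV Vf) (L.phi (L.liftV X))) ∧
    ((∀ X Y : Vb, lieDerivTwoForm Cb Vf (fun A B => gb A (J B)) X Y = 0) →
      (∀ W W' : Vm,
        lieDerivTwoForm Cm (L.liftV Vf) (fun A B => L.gL A (L.phi B)) W W' = 0) ∧
      IsClosedOneForm Cm (fun W => lieDerivOneForm Cm (L.liftV Vf) L.eta W)) := by
  obtain ⟨h_horizontal, h_mixed, h_aut⟩ := lift_of_killing_field_general L Vf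
  exact ⟨fun X Y => by rw [h_horizontal, hKill, map_zero], h_mixed, h_aut⟩
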